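/- arXiv:0905.0913 — 5 statements merged into one kernel-verified Lean document; each statement's English description precedes it below -/
import Mathlib

section
/- For every infinite field K and every n ≥ 2, the projective special linear group PSL_n(K) = SL_n(K)/Z(SL_n(K)) is boundedly simple. -/
/-!
Write `W = Kⁿ`. The theorem follows from a bound, depending only on `n`, for expressing an arbitrary
element of `SL(W)` through conjugates of a noncentral `g` and of `g⁻¹`.

* `exists_root_subgroup`: since `g` is not a homothety, some `v` has `v`, `g v` independent. For a
  form `φ` with `φ v = 1`, `φ (g v) = 0`, a diagonal element `d` with eigenvalues `a`, `a⁻¹`, `1`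
  can be chosen so that `g v` and `φ` are right and left eigenvectors of `h = g d g⁻¹ d⁻¹`. Hence `h`
  normalizes the root subgroup of transvections `x ↦ x + (c * φ x) • g v`, acting on the parameter
  `c` by a scalar, which differs from `1` if `a³ ≠ 1` and `a⁴ ≠ 1`; such an `a ≠ 0` exists because
  `K` is infinite. So the commutators of `h` with this root subgroup fill it, and each of its
  elements is a product of four conjugates of `g` or `g⁻¹`.
* `exists_conj_tv`: all root subgroups are conjugate in `SL(W)`, so the same bound holds for every
  transvection.
* `mem_transvections_pow_mul`: by Dieudonné's theorem every element of `GL(W)` is a product of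
  `n + 1` transvections and one dilatransvection. For an element of `SL(W)` the latter has
  determinant `1`, so it is a transvection too.

Altogether `4 (n + 2)` conjugates suffice in `SL(W)`, and therefore in its quotient by the center.
-/


open Pointwise

namespace BSTrees

universe u

variable {V : Type u} {I : Type*}

/-- `π` is an automorphism of the graph `G`. -/
def IsAut (G : SimpleGraph V) (π : Equiv.Perm V) : Prop :=
  ∀ x y : V, G.Adj (π x) (π y) ↔ G.Adj x y

/-- The automorphism group of `G`, as a subgroup of `Equiv.Perm V`. -/
def autGroup (G : SimpleGraph V) : Subgroup (Equiv.Perm V) where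
  carrier := {π | IsAut G π}
  one_mem' := fun _ _ => Iff.rfl
  mul_mem' := fun {a b} ha hb x y => (ha (b x) (b y)).trans (hb x y)
  inv_mem' := fun {a} ha x y => by
    have h := (ha (a⁻¹ x) (a⁻¹ y)).symm
    simpa using h

/-- `z` lies on the geodesic between `x` and `y`. -/
def OnGeodesic (G : SimpleGraph V) (x y z : V) : Prop :=
  G.dist x z + G.dist z y = G.dist x y

/-- A set of vertices closed under geodesics (inducing a subtree). -/
def GeodClosed (G : SimpleGraph V) (S : Set V) : Prop :=
  ∀ x ∈ S, ∀ y ∈ S, ∀ z, OnGeodesic G x y z → z ∈ S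

/-- A rotation: an automorphism fixing some vertex. -/
def IsRotation (π : Equiv.Perm V) : Prop := ∃ v, π v = v

/-- An inversion (symmetry): an automorphism swapping the endpoints of some edge. -/
def IsInversion (G : SimpleGraph V) (π : Equiv.Perm V) : Prop :=
  ∃ x y, G.Adj x y ∧ π x = y ∧ π y = x

/-- A translation: neither a rotation nor an inversion. -/
def IsTranslation (G : SimpleGraph V) (π : Equiv.Perm V) : Prop :=
  ¬ IsRotation π ∧ ¬ IsInversion G π

/-- `ℓ` is the translation length of `π`: the minimum of `dist s (π s)`. -/
def TranslationLengthIs (G : SimpleGraph V) (π : Equiv.Perm V) (ℓ : ℕ) : Prop :=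
  IsLeast {d | ∃ s, G.dist s (π s) = d} ℓ

/-- Elements of `H` pointwise stabilizing some edge of `G`. -/
def edgeStabilizers (G : SimpleGraph V) (H : Subgroup (Equiv.Perm V)) :
    Set (Equiv.Perm V) :=
  {π | π ∈ H ∧ ∃ x y, G.Adj x y ∧ π x = x ∧ π y = y}

/-- `H⁺`: the subgroup generated by pointwise stabilizers in `H` of edges. -/
def plusGroup (G : SimpleGraph V) (H : Subgroup (Equiv.Perm V)) :
    Subgroup (Equiv.Perm V) :=
  Subgroup.closure (edgeStabilizers G H)

/-- The group of color-preserving automorphisms of the colored tree `(G, f)`. -/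
def autf (G : SimpleGraph V) (f : V → I) : Subgroup (Equiv.Perm V) where
  carrier := {π | IsAut G π ∧ ∀ v, f (π v) = f v}
  one_mem' := ⟨fun _ _ => Iff.rfl, fun _ => rfl⟩
  mul_mem' := fun {a b} ha hb =>
    ⟨fun x y => (ha.1 (b x) (b y)).trans (hb.1 x y),
     fun v => (ha.2 (b v)).trans (hb.2 v)⟩
  inv_mem' := fun {a} ha => by
    refine ⟨fun x y => ?_, fun v => ?_⟩
    · have h := (ha.1 (a⁻¹ x) (a⁻¹ y)).symm
      simpa using h
    · have h := (ha.2 (a⁻¹ v)).symm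
      simpa using h

/-- `Aut_f⁺(A)`. -/
def autfPlus (G : SimpleGraph V) (f : V → I) : Subgroup (Equiv.Perm V) :=
  plusGroup G (autf G f)

/-- `Aut⁺(A)`. -/
def autPlus (G : SimpleGraph V) : Subgroup (Equiv.Perm V) :=
  plusGroup G (autGroup G)

/-- A ray in `G`. -/
def IsRay (G : SimpleGraph V) (r : ℕ → V) : Prop :=
  Function.Injective r ∧ ∀ n, G.Adj (r n) (r (n + 1))

/-- Two rays determine the same end iff their images have infinite intersection. -/
def SameEnd (r r' : ℕ → V) : Prop := (Set.range r ∩ Set.range r').Infinite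

/-- `H` stabilizes the end of the ray `r`. -/
def StabilizesEnd (G : SimpleGraph V) (H : Subgroup (Equiv.Perm V)) (r : ℕ → V) :
    Prop :=
  ∀ π ∈ H, ∀ r' : ℕ → V, IsRay G r' → SameEnd r' r → SameEnd (π ∘ r') r

/-- `H` does not stabilize any end of `G`. -/
def NoStabilizedEnd (G : SimpleGraph V) (H : Subgroup (Equiv.Perm V)) : Prop :=
  ¬ ∃ r : ℕ → V, IsRay G r ∧ StabilizesEnd G H r

/-- `H` leaves no nonempty proper subtree of `G` invariant. -/
def NoInvariantSubtree (G : SimpleGraph V) (H : Subgroup (Equiv.Perm V)) : Prop :=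
  ¬ ∃ S : Set V, S.Nonempty ∧ S ≠ Set.univ ∧ GeodClosed G S ∧
    ∀ π ∈ H, π '' S = S

/-- A path in the tree: a nonempty geodesically closed set in which every vertex
has at most two neighbors inside the set. -/
def IsPathSet (G : SimpleGraph V) (C : Set V) : Prop :=
  C.Nonempty ∧ GeodClosed G C ∧
    ∀ v ∈ C, ∀ a ∈ C, ∀ b ∈ C, ∀ c ∈ C,
      G.Adj v a → G.Adj v b → G.Adj v c → a = b ∨ a = c ∨ b = c

/-- `p` is a nearest-point projection onto `C`. -/
def IsProj (G : SimpleGraph V) (C : Set V) (p : V → V) : Prop :=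
  ∀ x, p x ∈ C ∧ ∀ c ∈ C, G.dist x (p x) ≤ G.dist x c

/-- Tits' independence property `(P)` for `H ≤ Aut(G)`: for every path `C` with
nearest-point projection `p`, and every family of elements of the pointwise
stabilizer of `C`, there is a unique element of that stabilizer agreeing with
the `s`-th member of the family on the fiber `p⁻¹(s)`, for every `s ∈ C`. -/
def PropertyP (G : SimpleGraph V) (H : Subgroup (Equiv.Perm V)) : Prop :=
  ∀ C : Set V, IsPathSet G C → ∀ p : V → V, IsProj G C p →
    ∀ gs : V → Equiv.Perm V,
      (∀ s ∈ C, gs s ∈ H ∧ ∀ c ∈ C, gs s c = c) →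
      ∃! g : Equiv.Perm V, g ∈ H ∧ (∀ c ∈ C, g c = c) ∧
        ∀ s ∈ C, ∀ x, p x = s → g x = gs s x

/-- A group is `N`-boundedly simple if every nontrivial element is a product of
at most `N` conjugates of `g` or of `g⁻¹`, for every nontrivial `g`. -/
def IsNBoundedlySimple (Γ : Type*) [Group Γ] (N : ℕ) : Prop :=
  ∀ g h : Γ, g ≠ 1 → h ≠ 1 →
    ∃ l : List Γ, l.length ≤ N ∧
      (∀ x ∈ l, ∃ c : Γ, x = c * g * c⁻¹ ∨ x = c * g⁻¹ * c⁻¹) ∧ l.prod = h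

/-- A group is boundedly simple if it is `N`-boundedly simple for some `N`. -/
def IsBoundedlySimple (Γ : Type*) [Group Γ] : Prop :=
  ∃ N : ℕ, IsNBoundedlySimple Γ N

/-- The conjugacy class of `g` under conjugation by elements of `H`. -/
def conjClassIn {Γ : Type*} [Group Γ] (H : Subgroup Γ) (g : Γ) : Set Γ :=
  {k | ∃ c ∈ H, k = c * g * c⁻¹}

/-- A ramification point: a vertex with at least three neighbors. -/
def IsRamification (G : SimpleGraph V) (r : V) : Prop :=
  ∃ a b c, a ≠ b ∧ a ≠ c ∧ b ≠ c ∧ G.Adj r a ∧ G.Adj r b ∧ G.Adj r c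

/-- An `(n,m)`-biregular tree: a proper 2-coloring where every vertex of the
first color has exactly `n` neighbors and every vertex of the second has `m`. -/
def IsBiregular (G : SimpleGraph V) (n m : Cardinal.{u}) : Prop :=
  ∃ c : V → Bool, (∀ x y, G.Adj x y → c x ≠ c y) ∧
    (∀ v, c v = false → Cardinal.mk (G.neighborSet v) = n) ∧
    (∀ v, c v = true → Cardinal.mk (G.neighborSet v) = m)

/-- An almost `(n,m)`-regular tree: a subdivision of the `(n,m)`-biregular tree,
described by a coloring `g : V → {0,…,k}`. -/
def IsAlmostBiregular (G : SimpleGraph V) (n m : Cardinal.{u}) : Prop :=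
  ∃ k : ℕ, 1 ≤ k ∧ ∃ g : V → ℕ, (∀ v, g v ≤ k) ∧
    (∀ v, g v = 0 → (∀ w, G.Adj v w → g w = 1) ∧
      Cardinal.mk (G.neighborSet v) = n) ∧
    (∀ v, g v = k → (∀ w, G.Adj v w → g w = k - 1) ∧
      Cardinal.mk (G.neighborSet v) = m) ∧
    (∀ v, 0 < g v → g v < k → ∃ a b, a ≠ b ∧ G.Adj v a ∧ G.Adj v b ∧
      g a = g v - 1 ∧ g b = g v + 1 ∧ ∀ w, G.Adj v w → w = a ∨ w = b)

/-- The axis of a translation: vertices of minimal displacement. -/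
def axisSet (G : SimpleGraph V) (π : Equiv.Perm V) : Set V :=
  {v | ∀ w, G.dist v (π v) ≤ G.dist w (π w)}


/-! ### Products of boundedly many conjugates -/

section Conjugates

variable {G G' : Type*} [Group G] [Group G']

/-- `x` is a product of at most `m` conjugates of `g` or `g⁻¹`. -/
def IsConjProd (g : G) (m : ℕ) (x : G) : Prop :=
  ∃ l : List G, l.length ≤ m ∧
    (∀ y ∈ l, ∃ c : G, y = c * g * c⁻¹ ∨ y = c * g⁻¹ * c⁻¹) ∧ l.prod = x

lemma IsConjProd.one (g : G) (m : ℕ) : IsConjProd g m 1 := ⟨[], by simp⟩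

lemma IsConjProd.self (g : G) : IsConjProd g 1 g :=
  ⟨[g], by simp, by simpa using ⟨1, by simp⟩, by simp⟩

lemma IsConjProd.mono {g x : G} {m m' : ℕ} (h : IsConjProd g m x) (hm : m ≤ m') :
    IsConjProd g m' x := by
  obtain ⟨l, hl, hc, hp⟩ := h
  exact ⟨l, hl.trans hm, hc, hp⟩

lemma IsConjProd.mul {g x y : G} {m m' : ℕ} (hx : IsConjProd g m x) (hy : IsConjProd g m' y) :
    IsConjProd g (m + m') (x * y) := by
  obtain ⟨l, hl, hc, rfl⟩ := hx
  obtain ⟨l', hl', hc', rfl⟩ := hy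
  refine ⟨l ++ l', by simp; omega, fun z hz => ?_, by simp⟩
  rcases List.mem_append.1 hz with h | h
  exacts [hc z h, hc' z h]

lemma IsConjProd.conj {g x : G} {m : ℕ} (hx : IsConjProd g m x) (a : G) :
    IsConjProd g m (a * x * a⁻¹) := by
  obtain ⟨l, hl, hc, rfl⟩ := hx
  refine ⟨l.map (MulAut.conj a), by simpa using hl, fun z hz => ?_, ?_⟩
  · obtain ⟨y, hy, rfl⟩ := List.mem_map.1 hz
    obtain ⟨c, rfl | rfl⟩ := hc y hy
    · exact ⟨a * c, Or.inl (by simp [mul_assoc])⟩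
    · exact ⟨a * c, Or.inr (by simp [mul_assoc])⟩
  · rw [← map_list_prod]; simp

lemma IsConjProd.inv {g x : G} {m : ℕ} (hx : IsConjProd g m x) : IsConjProd g m x⁻¹ := by
  obtain ⟨l, hl, hc, rfl⟩ := hx
  refine ⟨(l.map (·⁻¹)).reverse, by simpa using hl, fun z hz => ?_,
    (List.prod_inv_reverse l).symm⟩
  obtain ⟨y, hy, rfl⟩ := List.mem_map.1 (List.mem_reverse.1 hz)
  obtain ⟨c, rfl | rfl⟩ := hc y hy
  · exact ⟨c, Or.inr (by simp [mul_assoc])⟩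
  · exact ⟨c, Or.inl (by simp [mul_assoc])⟩

lemma IsConjProd.commutator {g x : G} {m : ℕ} (hx : IsConjProd g m x) (a : G) :
    IsConjProd g (m + m) (x * a * x⁻¹ * a⁻¹) := by
  simpa [mul_assoc] using hx.mul (hx.inv.conj a)

lemma IsConjProd.map {g x : G} {m : ℕ} (hx : IsConjProd g m x) (φ : G →* G') :
    IsConjProd (φ g) m (φ x) := by
  obtain ⟨l, hl, hc, rfl⟩ := hx
  refine ⟨l.map φ, by simpa using hl, fun z hz => ?_, by rw [map_list_prod]⟩
  obtain ⟨y, hy, rfl⟩ := List.mem_map.1 hz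
  obtain ⟨c, rfl | rfl⟩ := hc y hy
  · exact ⟨φ c, Or.inl (by simp)⟩
  · exact ⟨φ c, Or.inr (by simp)⟩

end Conjugates

section Linear

open Module

variable {K W : Type*} [Field K] [AddCommGroup W] [Module K W]

/-! ### Separating vectors and linear forms -/

lemma exists_dual_zero_one {v w : W} (h : w ∉ K ∙ v) : ∃ f : Dual K W, f v = 0 ∧ f w = 1 := by
  obtain ⟨f, hf, hle⟩ := Submodule.exists_le_ker_of_notMem h
  refine ⟨(f w)⁻¹ • f, ?_, by simp [hf]⟩
  have : f v = 0 := hle (Submodule.mem_span_singleton_self v)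
  simp [this]

lemma notMem_span_swap {v w : W} (hv : v ≠ 0) (h : w ∉ K ∙ v) : v ∉ K ∙ w := by
  rw [Submodule.mem_span_singleton] at h ⊢
  rintro ⟨c, rfl⟩
  have hc : c ≠ 0 := by rintro rfl; simp at hv
  exact h ⟨c⁻¹, by simp [smul_smul, hc]⟩

lemma exists_dual_one_one {v w : W} (hv : v ≠ 0) (h : w ∉ K ∙ v) :
    ∃ f : Dual K W, f v = 1 ∧ f w = 1 := by
  obtain ⟨f, hf, hf'⟩ := exists_dual_zero_one h
  obtain ⟨k, hk, hk'⟩ := exists_dual_zero_one (notMem_span_swap hv h)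
  exact ⟨f + k, by simp [hf, hk'], by simp [hf', hk]⟩

lemma exists_vector_one_one [FiniteDimensional K W] {k f : Dual K W} (hk : k ≠ 0)
    (h : f ∉ K ∙ k) : ∃ u : W, k u = 1 ∧ f u = 1 := by
  obtain ⟨Φ, hΦ⟩ := exists_dual_one_one hk h
  obtain ⟨u, rfl⟩ := (evalEquiv K W).surjective Φ
  exact ⟨u, by simpa using hΦ⟩

/-! ### Transvections in the special linear group -/

/-- The transvection `x ↦ x + (c * f x) • v`, as an element of `SL(W)`. -/
def tv {f : Dual K W} {v : W} (h : f v = 0) (c : K) : SpecialLinearGroup K W :=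
  ⟨LinearEquiv.transvection (f := f) (v := c • v) (by simp [h]),
    LinearEquiv.transvection.det_eq_one _⟩

lemma tv_apply {f : Dual K W} {v : W} (h : f v = 0) (c : K) (x : W) :
    tv h c x = x + (c * f x) • v := by
  simp [tv, LinearMap.transvection.apply, smul_smul, mul_comm]

lemma SL_mul_apply (A B : SpecialLinearGroup K W) (x : W) : (A * B) x = A (B x) := rfl

lemma tv_mul {f : Dual K W} {v : W} (h : f v = 0) (c c' : K) :
    tv h c * tv h c' = tv h (c + c') := by
  ext x
  simp only [SL_mul_apply, tv_apply, map_add, map_smul, h]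
  module

lemma tv_zero {f : Dual K W} {v : W} (h : f v = 0) : tv h 0 = 1 := by
  ext x
  simp [tv_apply]

lemma tv_inv {f : Dual K W} {v : W} (h : f v = 0) (c : K) : (tv h c)⁻¹ = tv h (-c) := by
  rw [inv_eq_iff_mul_eq_one, tv_mul]; simp [tv_zero]

/-- Conjugating by `A` a transvection along `v` with form `f`, when `A` maps `v` to `p • v'` and
pulls `f'` back to a form of which `f` is the multiple by `q`. -/
lemma conj_tv {f f' : Dual K W} {v v' : W} (h : f v = 0) (h' : f' v' = 0)
    (A : SpecialLinearGroup K W) {p q : K} (hv : A v = p • v') (hf : ∀ x, f x = q * f' (A x))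
    (c : K) : A * tv h c * A⁻¹ = tv h' (q * p * c) := by
  rw [mul_inv_eq_iff_eq_mul]
  ext x
  simp only [SL_mul_apply, tv_apply, map_add, map_smul, hv, hf]
  module

/-- Any two root subgroups are conjugate: two flags (line inside hyperplane) are carried to each
other by a product of two transvections, the first aligning the lines, the second the
hyperplanes. -/
lemma exists_conj_tv [FiniteDimensional K W] {f f' : Dual K W} {v v' : W} (h : f v = 0)
    (h' : f' v' = 0) (hv : v ≠ 0) (hv' : v' ≠ 0) (hf : f ≠ 0) (hf' : f' ≠ 0) :
    ∃ (A : SpecialLinearGroup K W) (r : K), r ≠ 0 ∧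
      ∀ c, A * tv h c * A⁻¹ = tv h' (r * c) := by
  obtain ⟨A, p, hp, hA⟩ : ∃ (A : SpecialLinearGroup K W) (p : K), p ≠ 0 ∧ A v = p • v' := by
    by_cases hs : v' ∈ K ∙ v
    · obtain ⟨p, rfl⟩ := Submodule.mem_span_singleton.1 hs
      have hp : p ≠ 0 := by rintro rfl; simp at hv'
      exact ⟨1, p⁻¹, inv_ne_zero hp, by simp [smul_smul, hp]⟩
    · obtain ⟨m, h1, h2⟩ := exists_dual_one_one hv hs
      have hm : m (v' - v) = 0 := by simp [h1, h2]
      exact ⟨tv hm 1, 1, one_ne_zero, by simp [tv_apply, h1]⟩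
  -- the form `f` transported by `A`
  set k : Dual K W := f ∘ₗ (A⁻¹ : SpecialLinearGroup K W).toLinearEquiv.toLinearMap with hkdef
  have hkA : ∀ x, k (A x) = f x := fun x => by
    change f ((A⁻¹ * A) x) = f x
    simp
  have hk : k ≠ 0 := by
    rintro hk
    exact hf (LinearMap.ext fun x => by simp [← hkA, hk])
  have hkv' : k v' = 0 := by
    have := hkA v
    rw [hA, h, map_smul, smul_eq_mul] at this
    exact (mul_eq_zero.1 this).resolve_left hp
  have hconj := conj_tv h hkv' A (q := 1) hA (fun x => by rw [hkA, one_mul])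
  obtain ⟨B, q, hq, hB, hBf⟩ : ∃ (B : SpecialLinearGroup K W) (q : K), q ≠ 0 ∧ B v' = v' ∧
      ∀ x, k x = q * f' (B x) := by
    by_cases hs : f' ∈ K ∙ k
    · obtain ⟨q, rfl⟩ := Submodule.mem_span_singleton.1 hs
      have hq : q ≠ 0 := by rintro rfl; simp at hf'
      exact ⟨1, q⁻¹, inv_ne_zero hq, by simp, fun x => by simp [hq]⟩
    · obtain ⟨u, h1, h2⟩ := exists_vector_one_one hk hs
      have hm : (k - f') u = 0 := by simp [h1, h2]
      refine ⟨tv hm 1, 1, one_ne_zero, by simp [tv_apply, hkv', h'], fun x => ?_⟩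
      simp [tv_apply, h2]
  have hconj' := conj_tv hkv' h' B (p := 1) (by rw [hB, one_smul]) hBf
  refine ⟨B * A, q * p, mul_ne_zero hq hp, fun c => ?_⟩
  have : B * A * tv h c * (B * A)⁻¹ = B * (A * tv h c * A⁻¹) * B⁻¹ := by group
  rw [this, hconj, hconj']
  congr 1; ring

/-! ### Root subgroups from an arbitrary noncentral element -/

/-- When `φ`, `ψ` are forms dual to `v`, `w`, this `d` has eigenvalue `a` on `v`, `a⁻¹` on `w` and
`1` on the common kernel of `φ` and `ψ`. -/
lemma exists_diagonal [FiniteDimensional K W] {v w : W} {φ ψ : Dual K W} (hφv : φ v = 1)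
    (hφw : φ w = 0) (hψw : ψ w = 1) {a : K} (ha : a ≠ 0) :
    ∃ d : SpecialLinearGroup K W,
      ∀ x, d x = x + ((a - 1) * φ x) • v + ((a⁻¹ - 1) * ψ x) • w := by
  have h1 : IsUnit (1 + ((a - 1) • φ) v) := by simp [hφv, ha]
  have h2 : IsUnit (1 + ((a⁻¹ - 1) • ψ) w) := by simp [hψw, ha]
  refine ⟨⟨LinearEquiv.dilatransvection h1 * LinearEquiv.dilatransvection h2, ?_⟩, fun x => ?_⟩
  · rw [← Units.val_inj, map_mul, Units.val_mul, LinearEquiv.coe_det, LinearEquiv.coe_det]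
    simp [hφv, hψw, ha]
  · change LinearEquiv.dilatransvection h1 (LinearEquiv.dilatransvection h2 x) = _
    simp only [LinearEquiv.dilatransvection.apply, map_add, map_smul,
      LinearMap.smul_apply, smul_eq_mul, hφw]
    module

/-- The key step. Pick `v` with `v`, `g v` independent and a form `φ` with `φ v = 1`,
`φ (g v) = 0`. A suitable diagonal `d` makes `g v` and `φ` right and left eigenvectors of
`h = g d g⁻¹ d⁻¹`, with eigenvalues such that the commutators of `h` with the transvections
along `g v` with form `φ` exhaust this root subgroup. -/
lemma exists_root_subgroup [FiniteDimensional K W] [Infinite K] (g : SpecialLinearGroup K W)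
    (hg : g ∉ Subgroup.center (SpecialLinearGroup K W)) :
    ∃ (f : Dual K W) (w : W) (h : f w = 0), f ≠ 0 ∧ w ≠ 0 ∧ ∀ c, IsConjProd g 4 (tv h c) := by
  obtain ⟨v, hv, hvg⟩ : ∃ v : W, v ≠ 0 ∧ g v ∉ K ∙ v := by
    by_contra! hcon
    obtain ⟨r, hr⟩ := LinearMap.exists_eq_smul_id_of_forall_notLinearIndependent
      (f := (g.toLinearEquiv : W →ₗ[K] W)) (fun v hli => by
        have hv : v ≠ 0 := hli.ne_zero 0
        obtain ⟨c, hc⟩ := Submodule.mem_span_singleton.1 (hcon v hv)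
        have := LinearIndependent.pair_iff.1 hli c (-1) (by
          rw [hc]; simp)
        simp at this)
    refine hg (Subgroup.mem_center_iff.2 fun b => ?_)
    have hscal : ∀ x, g x = r • x := fun x => LinearMap.congr_fun hr x
    ext x
    simp [hscal]
  -- `a` is nonzero and neither a cube root nor a fourth root of unity
  obtain ⟨a, ha0, ha3, ha4⟩ : ∃ a : K, a ≠ 0 ∧ a ^ 3 ≠ 1 ∧ a ^ 4 ≠ 1 := by
    classical
    obtain ⟨a, ha⟩ := Infinite.exists_notMem_finset
      ({0} ∪ (Polynomial.nthRoots 3 (1 : K)).toFinset ∪ (Polynomial.nthRoots 4 (1 : K)).toFinset)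
    exact ⟨a, by simpa [Polynomial.mem_nthRoots, and_assoc] using ha⟩
  obtain ⟨φ, hφw, hφv⟩ := exists_dual_zero_one (notMem_span_swap hv hvg)
  -- `ψ` is proportional to `φ ∘ g` whenever the latter does not vanish at `g v`
  obtain ⟨ψ, hψv, hψw, hψ⟩ : ∃ ψ : Dual K W, ψ v = 0 ∧ ψ (g v) = 1 ∧
      (φ (g (g v)) = 0 ∨ ∀ x, φ (g x) = φ (g (g v)) * ψ x) := by
    by_cases h0 : φ (g (g v)) = 0
    · obtain ⟨ψ, h1, h2⟩ := exists_dual_zero_one hvg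
      exact ⟨ψ, h1, h2, Or.inl h0⟩
    · exact ⟨(φ (g (g v)))⁻¹ • (φ ∘ₗ g.toLinearEquiv.toLinearMap), by simp [hφw],
        by simp [h0], Or.inr fun x => by simp [h0]⟩
  obtain ⟨d, hd⟩ := exists_diagonal hφv hφw hψw ha0
  have hdv : d v = a • v := by rw [hd, hφv, hψv]; module
  have hdw : d (g v) = a⁻¹ • g v := by rw [hd, hφw, hψw]; module
  have hφd : ∀ x, φ (d x) = a * φ x := fun x => by
    rw [hd]; simp only [map_add, map_smul, hφv, hφw, smul_eq_mul]; ring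
  obtain ⟨b, hb0, hb, hφgd⟩ : ∃ b : K, b ≠ 0 ∧ a ^ 3 * b⁻¹ ≠ 1 ∧
      ∀ x, φ (g (d x)) = b * φ (g x) := by
    have key : ∀ x, φ (g (d x)) = φ (g x) + ((a⁻¹ - 1) * ψ x) * φ (g (g v)) := fun x => by
      rw [hd]; simp only [map_add, map_smul, hφw, smul_eq_mul]; ring
    rcases hψ with h0 | h1
    · exact ⟨1, one_ne_zero, by simpa using ha3, fun x => by rw [key, h0]; ring⟩
    · refine ⟨a⁻¹, inv_ne_zero ha0, by simpa [← pow_succ] using ha4, fun x => ?_⟩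
      rw [key, h1 x]; ring
  set h := g * d * g⁻¹ * d⁻¹ with hh
  have hprod : IsConjProd g 2 h := (IsConjProd.self g).commutator d
  have hact : ∀ y, h (d (g y)) = g (d y) := fun y => by
    have : h * (d * g) = g * d := by rw [hh]; group
    simpa only [SL_mul_apply] using congrArg (fun A : SpecialLinearGroup K W => A y) this
  have hhw : h (g v) = (a ^ 2) • g v := by
    have h1 := hact v
    rw [hdv, hdw] at h1
    simp only [map_smul] at h1
    calc h (g v) = a • (a⁻¹ • h (g v)) := by rw [smul_smul, mul_inv_cancel₀ ha0, one_smul]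
      _ = _ := by rw [h1, smul_smul, sq]
  have hφh : ∀ x, φ x = (a * b⁻¹) * φ (h x) := fun x => by
    obtain ⟨y, rfl⟩ : ∃ y, d (g y) = x :=
      ⟨(d * g)⁻¹ x, by rw [← SL_mul_apply, ← SL_mul_apply, mul_inv_cancel]; rfl⟩
    rw [hact, hφd, hφgd]
    field_simp
  refine ⟨φ, g v, hφw, ?_, ?_, fun c => ?_⟩
  · rintro rfl; simp at hφv
  · intro h0; rw [h0] at hvg; simp at hvg
  · have hne : a * b⁻¹ * a ^ 2 - 1 ≠ 0 := by
      rw [sub_ne_zero]; intro h1; apply hb; rw [← h1]; ring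
    have := hprod.commutator (tv hφw ((a * b⁻¹ * a ^ 2 - 1)⁻¹ * c))
    rw [conj_tv hφw hφw h hhw hφh, tv_inv, tv_mul] at this
    rwa [← sub_eq_add_neg, ← sub_one_mul, mul_inv_cancel_left₀ hne] at this

/-- Every transvection is a product of at most four conjugates of a given noncentral element or
its inverse. -/
lemma isConjProd_tv [FiniteDimensional K W] [Infinite K] (g : SpecialLinearGroup K W)
    (hg : g ∉ Subgroup.center (SpecialLinearGroup K W)) {f : Dual K W} {v : W} (h : f v = 0)
    (c : K) : IsConjProd g 4 (tv h c) := by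
  by_cases hv : v = 0
  · have : tv h c = 1 := by ext x; simp [tv_apply, hv]
    rw [this]; exact .one _ _
  by_cases hf : f = 0
  · have : tv h c = 1 := by ext x; simp [tv_apply, hf]
    rw [this]; exact .one _ _
  obtain ⟨k, w, hkw, hk, hw, hall⟩ := exists_root_subgroup g hg
  obtain ⟨A, r, hr, hA⟩ := exists_conj_tv hkw h hw hv hk hf
  have := (hall (r⁻¹ * c)).conj A
  rwa [hA, mul_inv_cancel_left₀ hr] at this

/-! ### Bounded generation by transvections -/

/-- Dieudonné's theorem with a non-optimal bound. An exceptional `e`, acting as a homothety `a ≠ 1`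
modulo its fixed space `F`, becomes non-exceptional after multiplication by a transvection
trivial on `F`. -/
lemma mem_transvections_pow_mul [FiniteDimensional K W] (e : W ≃ₗ[K] W) :
    e ∈ LinearEquiv.transvections K W ^ (finrank K W + 1) * LinearEquiv.dilatransvections K W := by
  have hmono : ∀ e' : W ≃ₗ[K] W, ¬ LinearEquiv.IsExceptional e' →
      e' ∈ LinearEquiv.transvections K W ^ (finrank K W) *
        LinearEquiv.dilatransvections K W := by
    intro e' he'
    refine Set.mul_subset_mul_right (LinearEquiv.transvections_pow_mono ?_)
      (LinearEquiv.mem_transvections_pow_mul_dilatransvections_of_not_isExceptional he')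
    exact (Nat.sub_le _ _).trans (Submodule.finrank_quotient_le _)
  by_cases he : LinearEquiv.IsExceptional e
  swap
  · exact Set.mul_subset_mul_right (LinearEquiv.transvections_pow_mono (Nat.le_succ _)) (hmono e he)
  obtain ⟨hdim, hne, a, ha⟩ := he
  have ha' := (LinearEquiv.fixedReduce_eq_smul_iff e a).1 ha
  set F := e.fixedSubmodule with hF
  have hmem : ∀ x, x ∈ F ↔ e x = x := fun x => by simp [hF]
  have ha1 : a ≠ 1 := by
    rintro rfl
    exact hne (LinearEquiv.ext fun x => by simpa using ha x)
  obtain ⟨v, hv⟩ : ∃ v, v ∉ F := by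
    by_contra! hcon
    have : F = ⊤ := Submodule.eq_top_iff'.2 hcon
    rw [this] at hdim
    have := Submodule.finrank_quotient_add_finrank (⊤ : Submodule K W)
    rw [finrank_top] at this
    omega
  have ha0 : a ≠ 0 := by
    rintro rfl
    have := ha' v
    rw [zero_smul, sub_zero, hmem] at this
    exact hv ((hmem v).2 (e.injective this))
  obtain ⟨f, hf0, hf⟩ := Submodule.exists_le_ker_of_lt_top _
    (LinearEquiv.sup_span_singleton_lt_top v hdim)
  have hfF : ∀ x ∈ F, f x = 0 := fun x hx => hf (Submodule.mem_sup_left hx)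
  have hfv : f v = 0 := hf (Submodule.mem_sup_right (Submodule.mem_span_singleton_self v))
  have hfe : ∀ x, f (e x) = a * f x := fun x => by
    have := hfF _ (ha' x)
    rwa [map_sub, map_smul, sub_eq_zero] at this
  set t := LinearEquiv.transvection hfv with ht
  have hte : ∀ x, (t * e) x = e x + (a * f x) • v := fun x => by
    rw [← hfe]; rfl
  have hfix : ∀ x ∈ (t * e).fixedSubmodule, x ∈ F := by
    intro x hx
    have hx' : e x + (a * f x) • v = x := by rw [← hte]; simpa using hx
    have h1 := congrArg f hx'
    rw [map_add, map_smul, hfv, smul_zero, add_zero, hfe] at h1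
    have h2 : f x = 0 := by
      have : (a - 1) * f x = 0 := by linear_combination h1
      exact (mul_eq_zero.1 this).resolve_left (sub_ne_zero.2 ha1)
    rw [hmem]
    simpa [h2] using hx'
  have hnot : ¬ LinearEquiv.IsExceptional (t * e) := by
    rintro ⟨-, -, b, hb⟩
    have hb' := fun x => hfix _ ((LinearEquiv.fixedReduce_eq_smul_iff _ b).1 hb x)
    have hab : b = a := by
      by_contra hab
      have h1 := F.sub_mem (hb' v) (ha' v)
      rw [hte, hfv] at h1
      have h2 : (a - b) • v ∈ F := by convert h1 using 1; module
      exact hv ((F.smul_mem_iff (sub_ne_zero.2 (Ne.symm hab))).1 h2)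
    obtain ⟨x, hx⟩ : ∃ x, f x ≠ 0 := by
      by_contra! h0
      exact hf0 (LinearMap.ext h0)
    have h1 := F.sub_mem (hb' x) (ha' x)
    rw [hte, hab] at h1
    have h2 : (a * f x) • v ∈ F := by convert h1 using 1; module
    exact hv ((F.smul_mem_iff (mul_ne_zero ha0 hx)).1 h2)
  rw [pow_succ', mul_assoc]
  refine Set.mem_mul.2 ⟨t⁻¹, ?_, t * e, hmono _ hnot, by simp⟩
  rw [LinearEquiv.inv_mem_transvections_iff]
  exact LinearEquiv.mem_transvections _

lemma isConjProd_of_mem_transvections [FiniteDimensional K W] [Infinite K]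
    (g : SpecialLinearGroup K W) (hg : g ∉ Subgroup.center (SpecialLinearGroup K W))
    {x : SpecialLinearGroup K W} (hx : (x : W ≃ₗ[K] W) ∈ LinearEquiv.transvections K W) :
    IsConjProd g 4 x := by
  obtain ⟨f, v, h, he⟩ := hx
  have : x = tv h 1 := by
    ext y
    rw [tv_apply, he]
    simp [LinearMap.transvection.apply]
  rw [this]
  exact isConjProd_tv g hg h 1

lemma isConjProd_of_mem_transvections_pow [FiniteDimensional K W] [Infinite K]
    (g : SpecialLinearGroup K W) (hg : g ∉ Subgroup.center (SpecialLinearGroup K W)) (m : ℕ)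
    {e : W ≃ₗ[K] W} (he : e ∈ LinearEquiv.transvections K W ^ m) :
    ∃ x : SpecialLinearGroup K W, (x : W ≃ₗ[K] W) = e ∧ IsConjProd g (4 * m) x := by
  induction m generalizing e with
  | zero => exact ⟨1, by simpa using he.symm, .one _ _⟩
  | succ m ih =>
    rw [pow_succ] at he
    obtain ⟨p, hp, t, ht, rfl⟩ := Set.mem_mul.1 he
    obtain ⟨x, rfl, hx⟩ := ih hp
    have hdet : t.det = 1 := by
      obtain ⟨f, v, h, rfl⟩ := ht
      exact LinearEquiv.transvection.det_eq_one h
    exact ⟨x * ⟨t, hdet⟩, rfl, hx.mul (isConjProd_of_mem_transvections g hg ht)⟩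

/-- In dimension `n`, every element of `SL(W)` is a product of at most `4 (n + 2)` conjugates of any
noncentral `g` or its inverse. -/
lemma isConjProd_SL [FiniteDimensional K W] [Infinite K]
    (g : SpecialLinearGroup K W) (hg : g ∉ Subgroup.center (SpecialLinearGroup K W))
    (x : SpecialLinearGroup K W) : IsConjProd g (4 * (finrank K W + 1) + 4) x := by
  obtain ⟨p, hp, t, ht, hpt⟩ := Set.mem_mul.1 (mem_transvections_pow_mul (x : W ≃ₗ[K] W))
  obtain ⟨y, rfl, hy⟩ := isConjProd_of_mem_transvections_pow g hg _ hp
  have hyx : ((y⁻¹ * x : SpecialLinearGroup K W) : W ≃ₗ[K] W) = t := by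
    simp [← hpt]
  -- the remaining dilatransvection has determinant `1`, hence is a transvection
  have ht' : t ∈ LinearEquiv.transvections K W := by
    obtain ⟨f, v, hfv⟩ := ht
    have h1 : LinearMap.det (t : W →ₗ[K] W) = 1 := by
      rw [← hyx]; exact SpecialLinearGroup.det_eq_one _
    rw [hfv, LinearMap.transvection.det] at h1
    have h0 : f v = 0 := by simpa using h1
    refine ⟨f, v, h0, LinearEquiv.toLinearMap_injective ?_⟩
    rw [hfv, LinearEquiv.transvection.coe_toLinearMap]
  rw [← hyx] at ht'
  simpa using hy.mul (isConjProd_of_mem_transvections g hg ht')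

end Linear

/-- For every infinite field `K` and every `n ≥ 2`, the projective
special linear group `PSL_n(K) = SL_n(K)/Z(SL_n(K))` is boundedly simple. -/
theorem psl_isBoundedlySimple (K : Type*) [Field K] [Infinite K] (n : ℕ)
    (hn : 2 ≤ n) :
    IsBoundedlySimple (Matrix.SpecialLinearGroup (Fin n) K ⧸
      Subgroup.center (Matrix.SpecialLinearGroup (Fin n) K)) := by
  refine ⟨4 * (n + 1) + 4, fun g h hg _ => ?_⟩
  obtain ⟨g, rfl⟩ := QuotientGroup.mk_surjective g
  obtain ⟨h, rfl⟩ := QuotientGroup.mk_surjective h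
  let E := Matrix.SpecialLinearGroup.toLin'_equiv (n := Fin n) (R := K)
  have hgc : E g ∉ Subgroup.center (SpecialLinearGroup K (Fin n → K)) := by
    intro hc
    refine hg ((QuotientGroup.eq_one_iff g).2 (Subgroup.mem_center_iff.2 fun b => ?_))
    apply E.injective
    rw [map_mul, map_mul]
    exact Subgroup.mem_center_iff.1 hc (E b)
  have key := (isConjProd_SL (E g) hgc (E h)).map E.symm.toMonoidHom
  have key' := key.map (QuotientGroup.mk' (Subgroup.center _))
  simpa [IsConjProd] using key'

end BSTrees
end

section
/- Let A be a tree, let α, β ∈ Aut(A) and let x, y be distinct vertices with α(x) = x and β(y) = y. Suppose that on the geodesic from x to y the only vertex fixed by α is x and the only vertex fixed by β is y. Then α∘β is a translation with translation length 2·dist(x, y); in particular its translation length is even. -/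
/-!
Trees are `0`-hyperbolic (`four_point`), and the theorem is a computation with Gromov products.

The hypothesis on `α` says that the geodesics from `x` to `y` and from `x` to `α y` part at
their first step, so `dist y (α y) = 2 * dist x y` (`dist_rotation`); as `β y = y`, this is the
displacement of `y` under `α * β`. Symmetrically, `dist x (β x) = 2 * dist x y`.

For the lower bound, the displacement of `s` is `dist (α⁻¹ s) (β s)`. Consider the projection of
`s` to the geodesic from `x` to `y`. If it is not `x`, then `x` lies between `α⁻¹ s` and `y`; if
it is not `y`, then `y` lies between `β s` and `x` (`dist_rotation_of_branch`). If the projection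
is an endpoint, one of these facts and the triangle inequality give the bound; otherwise both
hold, and by `four_point` the geodesic from `α⁻¹ s` to `β s` passes through `x` and `y`, so its
length is `dist s x + dist x y + dist s y`. Since `2 * dist x y ≥ 2`, no vertex is fixed and no
edge is inverted.
-/

open Pointwise

namespace BSTrees

universe u

variable {V : Type u} {I : Type*}

/-! ### Distances in trees -/

section Helpers

variable {G : SimpleGraph V}

/-- In a tree, at most one neighbour of `x` is closer to `y` than `x` is. -/
lemma closer_neighbor_unique (hG : G.IsTree) {x y z z' : V} (hz : G.Adj x z) (hz' : G.Adj x z')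
    (h : G.dist x y = G.dist z y + 1) (h' : G.dist x y = G.dist z' y + 1) : z = z' := by
  obtain ⟨p, hp⟩ := hG.connected.exists_walk_length_eq_dist z y
  obtain ⟨p', hp'⟩ := hG.connected.exists_walk_length_eq_dist z' y
  have h1 : (SimpleGraph.Walk.cons hz p).IsPath :=
    SimpleGraph.Walk.isPath_of_length_eq_dist _ (by simp [hp, h])
  have h2 : (SimpleGraph.Walk.cons hz' p').IsPath :=
    SimpleGraph.Walk.isPath_of_length_eq_dist _ (by simp [hp', h'])
  have e := (hG.existsUnique_path x y).unique h1 h2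
  injection e

lemma exists_closer_neighbor (hG : G.IsTree) {x y : V} (h : x ≠ y) :
    ∃ z, G.Adj x z ∧ G.dist x y = G.dist z y + 1 := by
  obtain ⟨p, hp⟩ := hG.connected.exists_walk_length_eq_dist x y
  cases p with
  | nil => exact absurd rfl h
  | @cons _ z _ hz q =>
    refine ⟨z, hz, ?_⟩
    have h1 := SimpleGraph.dist_le q
    have h2 : G.dist x y ≤ G.dist x z + G.dist z y := hG.connected.dist_triangle
    rw [SimpleGraph.dist_eq_one_iff_adj.2 hz] at h2
    simp only [SimpleGraph.Walk.length_cons] at hp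
    omega

/-- If the first step `z` of the geodesic from `x` to `b` leads away from `a`, then `x` lies on
the geodesic from `a` to `b`: a geodesic that starts moving away from `a` keeps doing so. -/
lemma dist_eq_add_of_step_away (hG : G.IsTree) (a b : V) :
    ∀ (n : ℕ) (x z : V), G.dist x b = n → G.Adj x z → G.dist x b = G.dist z b + 1 →
      G.dist z a = G.dist x a + 1 → G.dist a b = G.dist x a + G.dist x b := by
  intro n
  induction n with
  | zero => intro x z h0 _ h1; omega
  | succ n ih =>
    intro x z hn hxz hb ha
    by_cases hzb : z = b
    · subst hzb
      rw [SimpleGraph.dist_comm, ha, SimpleGraph.dist_eq_one_iff_adj.2 hxz]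
    obtain ⟨w, hzw, hw⟩ := exists_closer_neighbor hG hzb
    have hwa : G.dist w a = G.dist z a + 1 := by
      have := hG.dist_eq_dist_add_one_of_adj a hzw
      rw [SimpleGraph.dist_comm (u := a), SimpleGraph.dist_comm (u := a)] at this
      rcases this with h | h
      · have e := closer_neighbor_unique hG hxz.symm hzw ha h
        subst e
        omega
      · exact h
    have := ih z w (by omega) hzw hw hwa
    omega

/-- Trees are `0`-hyperbolic: among the Gromov products `(a|c)`, `(a|b)`, `(b|c)` based at `x`,
the first is at least the minimum of the other two. -/
lemma four_point (hG : G.IsTree) (a b c : V) :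
    ∀ (n : ℕ) (x : V), G.dist x b = n →
      G.dist a c + G.dist x b ≤ G.dist x c + G.dist a b ∨
      G.dist a c + G.dist x b ≤ G.dist x a + G.dist b c := by
  intro n
  induction n with
  | zero =>
    intro x h
    have e : x = b := hG.connected.dist_eq_zero_iff.1 h
    subst e
    have : G.dist a c ≤ G.dist a x + G.dist x c := hG.connected.dist_triangle
    left; omega
  | succ n ih =>
    intro x hn
    have hxb : x ≠ b := by rintro rfl; simp at hn
    obtain ⟨z, hxz, hz⟩ := exists_closer_neighbor hG hxb
    have htri : G.dist a c ≤ G.dist a x + G.dist x c := hG.connected.dist_triangle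
    have h1 := hG.dist_eq_dist_add_one_of_adj a hxz
    have h2 := hG.dist_eq_dist_add_one_of_adj c hxz
    have h3 := dist_eq_add_of_step_away hG a b _ x z rfl hxz hz
    have h4 := dist_eq_add_of_step_away hG c b _ x z rfl hxz hz
    have h5 := ih z (by omega)
    simp only [SimpleGraph.dist_comm (u := a) (v := x), SimpleGraph.dist_comm (u := a) (v := z),
      SimpleGraph.dist_comm (u := c)] at *
    rw [SimpleGraph.dist_comm (u := b) (v := c)]
    simp only [SimpleGraph.dist_comm (u := c)] at *
    omega

/-! ### Automorphisms and displacement -/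

lemma dist_aut (hG : G.IsTree) {π : Equiv.Perm V} (h : π ∈ autGroup G) (u v : V) :
    G.dist (π u) (π v) = G.dist u v := by
  have key : ∀ {ρ : Equiv.Perm V}, ρ ∈ autGroup G → ∀ u v, G.dist (ρ u) (ρ v) ≤ G.dist u v := by
    intro ρ hρ u v
    obtain ⟨p, hp⟩ := hG.connected.exists_walk_length_eq_dist u v
    let f : G →g G := ⟨ρ, fun {a b} hab => (hρ a b).2 hab⟩
    have := SimpleGraph.dist_le (p.map f)
    rw [SimpleGraph.Walk.length_map, hp] at this
    exact this
  refine le_antisymm (key h u v) ?_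
  simpa using key ((autGroup G).inv_mem h) (π u) (π v)

/-- A rotation about `x` fixing no further vertex of the geodesic from `x` to `y` moves `y` as
far as possible: the geodesics from `x` to `y` and to `π y` already part at their first step. -/
lemma dist_rotation (hG : G.IsTree) {π : Equiv.Perm V} (h : π ∈ autGroup G) {x y : V}
    (hxy : x ≠ y) (hx : π x = x) (hfix : ∀ z, OnGeodesic G x y z → π z = z → z = x) :
    G.dist y (π y) = 2 * G.dist x y := by
  obtain ⟨z, hxz, hz⟩ := exists_closer_neighbor hG hxy
  have h1 : G.dist x z = 1 := SimpleGraph.dist_eq_one_iff_adj.2 hxz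
  have hne : π z ≠ z := fun e => hxz.ne' (hfix z (by unfold OnGeodesic; omega) e)
  have hxz' : G.Adj x (π z) := by
    have := (h x z).2 hxz
    rwa [hx] at this
  have e1 := dist_aut hG h x y
  have e2 := dist_aut hG h z y
  rw [hx] at e1
  have haway : G.dist (π z) y = G.dist x y + 1 := by
    have := hG.dist_eq_dist_add_one_of_adj y hxz'
    rw [SimpleGraph.dist_comm (u := y), SimpleGraph.dist_comm (u := y)] at this
    rcases this with h' | h'
    · exact absurd (closer_neighbor_unique hG hxz' hxz h' hz) hne
    · exact h'
  have := dist_eq_add_of_step_away hG y (π y) _ x (π z) rfl hxz' (by omega) haway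
  omega

/-- If `s` branches off the geodesic from `x` to `y` strictly after `x`, and `π` fixes `x` and
moves the geodesic off itself, then `x` lies on the geodesic from `π s` to `y`. -/
lemma dist_rotation_of_branch (hG : G.IsTree) {π : Equiv.Perm V} (h : π ∈ autGroup G) {x y s : V}
    (hx : π x = x) (hπ : G.dist y (π y) = 2 * G.dist x y)
    (hs : G.dist s y < G.dist s x + G.dist x y) :
    G.dist (π s) y = G.dist s x + G.dist x y := by
  have e1 := dist_aut hG h s y
  have e2 := dist_aut hG h s x
  have e3 := dist_aut hG h x y
  rw [hx] at e2 e3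
  have tri : G.dist (π s) y ≤ G.dist (π s) x + G.dist x y := hG.connected.dist_triangle
  have h4 := four_point hG y (π s) (π y) _ x rfl
  rw [SimpleGraph.dist_comm (u := x) (v := π s), SimpleGraph.dist_comm (u := y) (v := π s)] at h4
  omega

end Helpers

/-- if `α` fixes `x`, `β` fixes `y`, `x ≠ y` and on the geodesic
from `x` to `y` the only vertex fixed by `α` (resp. `β`) is `x` (resp. `y`),
then `α∘β` is a translation of translation length `2·dist(x,y)`, which is even. -/
theorem comp_rotations_isTranslation (G : SimpleGraph V) (hG : G.IsTree)
    (α β : Equiv.Perm V) (hα : α ∈ autGroup G) (hβ : β ∈ autGroup G)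
    (x y : V) (hxy : x ≠ y) (hαx : α x = x) (hβy : β y = y)
    (hα' : ∀ z, OnGeodesic G x y z → α z = z → z = x)
    (hβ' : ∀ z, OnGeodesic G x y z → β z = z → z = y) :
    IsTranslation G (α * β) ∧ TranslationLengthIs G (α * β) (2 * G.dist x y) ∧
      Even (2 * G.dist x y) := by
  -- As `β y = y`, this is also the displacement of `y` under `α * β`.
  have hy : G.dist y (α y) = 2 * G.dist x y := dist_rotation hG hα hxy hαx hα'
  have hαi := (autGroup G).inv_mem hα
  have hαix : α⁻¹ x = x := Equiv.Perm.inv_eq_iff_eq.2 hαx.symm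
  have hyi : G.dist y (α⁻¹ y) = 2 * G.dist x y := by
    have := dist_aut hG hα y (α⁻¹ y)
    rw [show α (α⁻¹ y) = y by simp, SimpleGraph.dist_comm] at this
    omega
  have hx : G.dist x (β x) = 2 * G.dist y x :=
    dist_rotation hG hβ hxy.symm hβy fun z hz =>
      hβ' z (by unfold OnGeodesic at *; simp only [SimpleGraph.dist_comm] at *; omega)
  have lower : ∀ s, 2 * G.dist x y ≤ G.dist s ((α * β) s) := by
    intro s
    -- Work with `dist (α⁻¹ s) (β s)`, so that each rotation acts on `s` itself.
    have e : G.dist s ((α * β) s) = G.dist (α⁻¹ s) (β s) := by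
      have := dist_aut hG hα (α⁻¹ s) (β s)
      rw [show α (α⁻¹ s) = s by simp] at this
      exact this
    have e1 := dist_aut hG hαi s x
    have e2 := dist_aut hG hβ s y
    rw [hαix] at e1
    rw [hβy] at e2
    have k1 := dist_rotation_of_branch hG (s := s) hαi hαix hyi
    have k2 := dist_rotation_of_branch hG (s := s) hβ hβy hx
    have t1 : G.dist s y ≤ G.dist s x + G.dist x y := hG.connected.dist_triangle
    have t2 : G.dist s x ≤ G.dist s y + G.dist y x := hG.connected.dist_triangle
    have t3 : G.dist x y ≤ G.dist x s + G.dist s y := hG.connected.dist_triangle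
    have t4 : G.dist (α⁻¹ s) y ≤ G.dist (α⁻¹ s) (β s) + G.dist (β s) y :=
      hG.connected.dist_triangle
    have t5 : G.dist (β s) x ≤ G.dist (β s) (α⁻¹ s) + G.dist (α⁻¹ s) x :=
      hG.connected.dist_triangle
    have q := four_point hG (α⁻¹ s) (β s) y _ x rfl
    have hpos := hG.connected.pos_dist_of_ne hxy
    rw [SimpleGraph.dist_comm (u := x) (v := β s), SimpleGraph.dist_comm (u := x) (v := α⁻¹ s)] at q
    rw [SimpleGraph.dist_comm (u := β s) (v := α⁻¹ s)] at t5
    rw [SimpleGraph.dist_comm (u := y) (v := x)] at t2 k2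
    rw [SimpleGraph.dist_comm (u := x) (v := s)] at t3
    -- If `t1` (or `t2`) is an equality, `k2` and `t5` (or `k1` and `t4`) suffice; otherwise `k1`
    -- and `k2` both apply, and `q` and `t3` conclude.
    omega
  have hpos := hG.connected.pos_dist_of_ne hxy
  refine ⟨⟨?_, ?_⟩, ⟨⟨y, ?_⟩, ?_⟩, even_two_mul _⟩
  · rintro ⟨v, hv⟩
    have := lower v
    rw [hv, SimpleGraph.dist_self] at this
    omega
  · rintro ⟨u, v, huv, hu, -⟩
    have := lower u
    rw [hu, SimpleGraph.dist_eq_one_iff_adj.2 huv] at this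
    omega
  · rw [Equiv.Perm.mul_apply, hβy, hy]
  · rintro _ ⟨s, rfl⟩
    exact lower s

end BSTrees
end

section
/- Let A be a tree and T ⊆ Aut(A) a set of automorphisms such that no element of T ∪ T·T (where T·T is the set of products of two elements of T) is a translation, i.e., every such element fixes some vertex or swaps the endpoints of some edge. Then no element of the subgroup of Aut(A) generated by T is a translation. -/
/-!
A tree has medians, so finitely many pairwise intersecting subtrees have a common vertex (Helly).
A non-translation `g` fixes the midpoint of the geodesic from `c` to `g c`, for every vertex `c`:
this midpoint is a fixed vertex if `g` is a rotation (`IsRotation.exists_midpoint`), and the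
midpoint of the inverted edge if `g` is an inversion (`exists_middle_edge`). Consequently, if
`s * t` fixes `c`, the non-translations `s` and `t` both fix the midpoint of the geodesic from `c`
to `t c` (`common_fixed`, `common_inverted`). The parity of displacements, which is additive under
composition, decides whether a non-translation is a rotation or an inversion.

If `T` contains an inversion `s` of an edge `e`, this applies to `s` and `t` for an inversion
`t ∈ T`, and to `s⁻¹` and `s * t` for a rotation `t ∈ T`; either way `t` preserves `e`
(`preserves_inverted_edge`), hence so does the group generated by `T`. Otherwise `T` consists of
rotations, whose fixed subtrees meet pairwise, and an element of the generated group is a word in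
finitely many elements of `T`, which have a common fixed vertex by Helly's theorem
(`helly_finset`).
-/

open Pointwise

namespace BSTrees

universe u

variable {V : Type u} {I : Type*}

/-! ### Geodesics and medians in trees -/

section TreeMetric

variable {G : SimpleGraph V}

theorem length_eq_dist_of_isPath (hG : G.IsTree) {u v : V} (p : G.Walk u v) (hp : p.IsPath) :
    p.length = G.dist u v := by
  obtain ⟨q, hq, hl⟩ := hG.connected.exists_path_of_dist u v
  rw [← hl, (hG.existsUnique_path u v).unique hp hq]

theorem exists_onGeodesic (hG : G.IsTree) {u v : V} {i : ℕ} (hi : i ≤ G.dist u v) :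
    ∃ z, OnGeodesic G u v z ∧ G.dist u z = i := by
  obtain ⟨p, hp⟩ := hG.connected.exists_walk_length_eq_dist u v
  have h1 := SimpleGraph.dist_le (p.take i)
  have h2 := SimpleGraph.dist_le (p.drop i)
  have h3 := hG.connected.dist_triangle (u := u) (v := p.getVert i) (w := v)
  rw [SimpleGraph.Walk.take_length] at h1
  rw [SimpleGraph.Walk.drop_length] at h2
  refine ⟨p.getVert i, ?_, ?_⟩
  · unfold OnGeodesic; omega
  · omega

theorem onGeodesic_unique (hG : G.IsTree) {u v z z' : V} (hz : OnGeodesic G u v z)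
    (hz' : OnGeodesic G u v z') (h : G.dist u z = G.dist u z') : z = z' := by
  obtain ⟨p, hp⟩ := hG.connected.exists_walk_length_eq_dist u z
  obtain ⟨q, hq⟩ := hG.connected.exists_walk_length_eq_dist z v
  obtain ⟨p', hp'⟩ := hG.connected.exists_walk_length_eq_dist u z'
  obtain ⟨q', hq'⟩ := hG.connected.exists_walk_length_eq_dist z' v
  have h1 : (p.append q).IsPath := SimpleGraph.Walk.isPath_of_length_eq_dist _ (by
    rw [SimpleGraph.Walk.length_append, hp, hq]; exact hz)
  have h2 : (p'.append q').IsPath := SimpleGraph.Walk.isPath_of_length_eq_dist _ (by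
    rw [SimpleGraph.Walk.length_append, hp', hq']; exact hz')
  have h3 := (hG.existsUnique_path u v).unique h1 h2
  have h4 : (p.append q).getVert p.length = z := by
    simp [SimpleGraph.Walk.getVert_append]
  have h5 : (p'.append q').getVert p'.length = z' := by
    simp [SimpleGraph.Walk.getVert_append]
  rw [← h4, ← h5, h3, hp, hp', h]

theorem onGeodesic_comm {u v z : V} : OnGeodesic G u v z ↔ OnGeodesic G v u z := by
  unfold OnGeodesic
  rw [G.dist_comm (u := u) (v := z), G.dist_comm (u := z) (v := v),
    G.dist_comm (u := u) (v := v), add_comm]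

/-- The points of a geodesic are ordered by their distance to its origin. -/
theorem onGeodesic_of_le (hG : G.IsTree) {u v z x : V} (hz : OnGeodesic G u v z)
    (hx : OnGeodesic G u v x) (h : G.dist u z ≤ G.dist u x) : OnGeodesic G u x z := by
  obtain ⟨z', hz', hd⟩ := exists_onGeodesic hG h
  have : z = z' := by
    refine onGeodesic_unique hG hz ?_ hd.symm
    have h1 := hG.connected.dist_triangle (u := z') (v := x) (w := v)
    have h2 := hG.connected.dist_triangle (u := u) (v := z') (w := v)
    unfold OnGeodesic at *
    omega
  rwa [this]

/-- Two geodesics that meet only in their common endpoint `m` concatenate to a geodesic. -/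
theorem onGeodesic_of_meet (hG : G.IsTree) {a b m : V}
    (h : ∀ z, OnGeodesic G a m z → OnGeodesic G m b z → z = m) : OnGeodesic G a b m := by
  classical
  obtain ⟨p, hp, hpl⟩ := hG.connected.exists_path_of_dist a m
  obtain ⟨q, hq, hql⟩ := hG.connected.exists_path_of_dist m b
  -- every vertex of a path lies on the corresponding geodesic
  have key : ∀ {u v : V} (r : G.Walk u v), r.IsPath → ∀ z ∈ r.support, OnGeodesic G u v z := by
    intro u v r hr z hz
    have h1 := length_eq_dist_of_isPath hG _ (hr.takeUntil hz)
    have h2 := length_eq_dist_of_isPath hG _ (hr.dropUntil hz)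
    have h3 := congrArg SimpleGraph.Walk.length (r.take_spec hz)
    rw [SimpleGraph.Walk.length_append, h1, h2, length_eq_dist_of_isPath hG r hr] at h3
    exact h3
  have hpath : (p.append q).IsPath := by
    apply SimpleGraph.Walk.IsPath.mk'
    rw [SimpleGraph.Walk.support_append, List.nodup_append]
    refine ⟨hp.support_nodup, hq.support_nodup.tail, ?_⟩
    rintro z hz z' hz' rfl
    have hzm : z = m := h z (key p hp z hz) (key q hq z (List.mem_of_mem_tail hz'))
    have hnd := hq.support_nodup
    rw [← SimpleGraph.Walk.cons_tail_support] at hnd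
    exact (List.nodup_cons.1 hnd).1 (hzm ▸ hz')
  have := length_eq_dist_of_isPath hG _ hpath
  rw [SimpleGraph.Walk.length_append, hpl, hql] at this
  exact this

/-- Existence of medians: the point of the geodesic `[b, c]` nearest to `a` lies on all three
geodesics between `a`, `b` and `c`. -/
theorem exists_median (hG : G.IsTree) (a b c : V) :
    ∃ m, OnGeodesic G a b m ∧ OnGeodesic G a c m ∧ OnGeodesic G b c m := by
  have hex : ∃ n, ∃ z, OnGeodesic G b c z ∧ G.dist a z = n :=
    ⟨_, b, by simp [OnGeodesic], rfl⟩
  classical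
  obtain ⟨m, hm, hmd⟩ := Nat.find_spec hex
  have hmin : ∀ z, OnGeodesic G b c z → G.dist a m ≤ G.dist a z := fun z hz => by
    rw [hmd]; exact Nat.find_min' hex ⟨z, hz, rfl⟩
  -- a point of `[a, m]` lying on `[b, c]` is no nearer to `a` than `m`, hence equals `m`
  have hfin : ∀ z, OnGeodesic G a m z → OnGeodesic G b c z → z = m := fun z hz hz' => by
    have := hmin z hz'
    apply (hG.connected.dist_eq_zero_iff).1
    unfold OnGeodesic at hz
    omega
  refine ⟨m, onGeodesic_of_meet hG fun z h1 h2 => hfin z h1 ?_,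
    onGeodesic_of_meet hG fun z h1 h2 => hfin z h1 ?_, hm⟩
  · have t1 := hG.connected.dist_triangle (u := z) (v := m) (w := c)
    have t2 := hG.connected.dist_triangle (u := b) (v := z) (w := c)
    have e1 := G.dist_comm (u := m) (v := z)
    have e2 := G.dist_comm (u := b) (v := z)
    have e3 := G.dist_comm (u := b) (v := m)
    unfold OnGeodesic at *
    omega
  · have t1 := hG.connected.dist_triangle (u := b) (v := m) (w := z)
    have t2 := hG.connected.dist_triangle (u := b) (v := z) (w := c)
    unfold OnGeodesic at *
    omega

/-- Trees are bipartite: the perimeter of a triangle is even. -/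
theorem even_perimeter (hG : G.IsTree) (a b c : V) :
    (G.dist a b + G.dist a c + G.dist b c) % 2 = 0 := by
  obtain ⟨m, h1, h2, h3⟩ := exists_median hG a b c
  have e1 := G.dist_comm (u := m) (v := b)
  unfold OnGeodesic at *
  omega

/-- If `c` is on the `x`-side and `w` on the `y`-side of the edge `xy`, then the geodesic from `c`
to `w` crosses this edge. -/
theorem dist_across_edge (hG : G.IsTree) {c w x y : V} (hxy : G.Adj x y)
    (hc : G.dist c y = G.dist c x + 1) (hw : G.dist w x = G.dist w y + 1) :
    G.dist c w = G.dist c x + 1 + G.dist w y := by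
  have h1 : G.dist x y = 1 := SimpleGraph.dist_eq_one_iff_adj.2 hxy
  have e1 := G.dist_comm (u := w) (v := x)
  have e2 := G.dist_comm (u := w) (v := y)
  have hx : OnGeodesic G c w x := by
    refine onGeodesic_of_meet hG fun z hz hz' => ?_
    by_contra hne
    have hpos := hG.connected.pos_dist_of_ne (Ne.symm hne)
    have hy : OnGeodesic G x w y := by unfold OnGeodesic; omega
    have hyz := onGeodesic_of_le hG hy hz' (by omega)
    have t := hG.connected.dist_triangle (u := c) (v := z) (w := y)
    have e3 := G.dist_comm (u := z) (v := y)
    have e4 := G.dist_comm (u := z) (v := x)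
    unfold OnGeodesic at *
    omega
  unfold OnGeodesic at hx
  omega

/-! ### The Helly property -/

theorem GeodClosed.inter {A B : Set V} (hA : GeodClosed G A) (hB : GeodClosed G B) :
    GeodClosed G (A ∩ B) :=
  fun x hx y hy z hz => ⟨hA x hx.1 y hy.1 z hz, hB x hx.2 y hy.2 z hz⟩

theorem helly_three (hG : G.IsTree) {A B C : Set V} (hA : GeodClosed G A) (hB : GeodClosed G B)
    (hC : GeodClosed G C) (hAB : (A ∩ B).Nonempty) (hAC : (A ∩ C).Nonempty)
    (hBC : (B ∩ C).Nonempty) : (A ∩ B ∩ C).Nonempty := by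
  obtain ⟨x, hxA, hxB⟩ := hAB
  obtain ⟨y, hyA, hyC⟩ := hAC
  obtain ⟨z, hzB, hzC⟩ := hBC
  obtain ⟨m, h1, h2, h3⟩ := exists_median hG x y z
  exact ⟨m, ⟨hA x hxA y hyA m h1, hB x hxB z hzB m h2⟩, hC y hyC z hzC m h3⟩

/-- Helly's theorem for finitely many pairwise intersecting subtrees. The set `A` accumulates
the subtrees already intersected. -/
theorem helly_finset (hG : G.IsTree) {ι : Type*} (f : ι → Set V) (s : Finset ι) :
    ∀ A : Set V, A.Nonempty → GeodClosed G A → (∀ i ∈ s, GeodClosed G (f i)) →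
      (∀ i ∈ s, (A ∩ f i).Nonempty) → (∀ i ∈ s, ∀ j ∈ s, (f i ∩ f j).Nonempty) →
      ∃ v ∈ A, ∀ i ∈ s, v ∈ f i := by
  classical
  induction s using Finset.induction_on with
  | empty => rintro A ⟨v, hv⟩ - - - -; exact ⟨v, hv, by simp⟩
  | insert k s _ ih =>
    intro A _ hA hf hAf hff
    have hk := Finset.mem_insert_self k s
    obtain ⟨v, hv, hvs⟩ := ih (A ∩ f k) (hAf k hk) (hA.inter (hf k hk))
      (fun i hi => hf i (Finset.mem_insert_of_mem hi))
      (fun i hi =>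
        have hi := Finset.mem_insert_of_mem hi
        helly_three hG hA (hf k hk) (hf i hi) (hAf k hk) (hAf i hi) (hff k hk i hi))
      (fun i hi j hj => hff i (Finset.mem_insert_of_mem hi) j (Finset.mem_insert_of_mem hj))
    refine ⟨v, hv.1, fun i hi => ?_⟩
    rcases Finset.mem_insert.1 hi with rfl | hi
    · exact hv.2
    · exact hvs i hi

/-! ### Rotations and inversions -/

theorem IsAut.dist_eq (hG : G.IsTree) {g : Equiv.Perm V} (hg : IsAut G g) (x y : V) :
    G.dist (g x) (g y) = G.dist x y := by
  have key : ∀ h : Equiv.Perm V, IsAut G h → ∀ x y, G.dist (h x) (h y) ≤ G.dist x y := by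
    intro h hh x y
    obtain ⟨p, hp⟩ := hG.connected.exists_walk_length_eq_dist x y
    let φ : G →g G := ⟨h, fun {a b} hab => (hh a b).2 hab⟩
    have := SimpleGraph.dist_le (p.map φ)
    rw [SimpleGraph.Walk.length_map, hp] at this
    exact this
  refine le_antisymm (key g hg x y) ?_
  have := key g⁻¹ ((autGroup G).inv_mem (x := g) hg) (g x) (g y)
  simpa using this

theorem IsAut.geodClosed_fixed (hG : G.IsTree) {g : Equiv.Perm V} (hg : IsAut G g) :
    GeodClosed G {v | g v = v} := by
  intro x hx y hy z hz
  have h1 := hg.dist_eq hG x z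
  have h2 := hg.dist_eq hG z y
  rw [Set.mem_ofPred_eq] at *
  rw [hx] at h1
  rw [hy] at h2
  refine onGeodesic_unique hG (u := x) (v := y) ?_ hz h1
  unfold OnGeodesic at *
  omega

/-- The parity of the displacement of an automorphism does not depend on the vertex. -/
theorem IsAut.displacement_parity (hG : G.IsTree) {g : Equiv.Perm V} (hg : IsAut G g) (u v : V) :
    G.dist u (g u) % 2 = G.dist v (g v) % 2 := by
  have h1 := even_perimeter hG u (g u) v
  have h2 := even_perimeter hG v (g u) (g v)
  have h3 := hg.dist_eq hG u v
  have e1 := G.dist_comm (u := g u) (v := v)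
  omega

theorem IsRotation.displacement_even (hG : G.IsTree) {g : Equiv.Perm V} (hg : IsAut G g)
    (hr : IsRotation g) (v : V) : G.dist v (g v) % 2 = 0 := by
  obtain ⟨u, hu⟩ := hr
  rw [hg.displacement_parity hG v u, hu, SimpleGraph.dist_self]

theorem IsInversion.displacement_odd (hG : G.IsTree) {g : Equiv.Perm V} (hg : IsAut G g)
    (hr : IsInversion G g) (v : V) : G.dist v (g v) % 2 = 1 := by
  obtain ⟨x, y, hxy, hx, -⟩ := hr
  rw [hg.displacement_parity hG v x, hx, SimpleGraph.dist_eq_one_iff_adj.2 hxy]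

theorem displacement_mul (hG : G.IsTree) (s t : Equiv.Perm V) (v : V) :
    G.dist v ((s * t) v) % 2 = (G.dist v (t v) + G.dist (t v) (s (t v))) % 2 := by
  have := even_perimeter hG v (t v) (s (t v))
  rw [Equiv.Perm.mul_apply]
  omega

/-- A rotation `g` fixes the midpoint of the geodesic from `c` to `g c`. -/
theorem IsRotation.exists_midpoint (hG : G.IsTree) {g : Equiv.Perm V} (hg : IsAut G g)
    (hr : IsRotation g) (c : V) :
    ∃ m, g m = m ∧ OnGeodesic G c (g c) m ∧ G.dist c m = G.dist m (g c) := by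
  obtain ⟨a, ha⟩ := hr
  obtain ⟨m, h1, h2, h3⟩ := exists_median hG a c (g c)
  have d1 := hg.dist_eq hG a c
  have d2 := hg.dist_eq hG a m
  have d3 := hg.dist_eq hG m c
  rw [ha] at d1 d2
  have e := G.dist_comm (u := m) (v := c)
  refine ⟨m, onGeodesic_unique hG (u := a) (v := g c) ?_ h2 d2, h3, ?_⟩ <;>
  · unfold OnGeodesic at *
    omega

/-- If the rotations `s`, `t` have a product fixing a vertex `c`, then they share the midpoint of
the geodesic from `c` to `t c` as a fixed vertex. -/
theorem common_fixed (hG : G.IsTree) {s t : Equiv.Perm V} (hs : IsAut G s) (ht : IsAut G t)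
    (hsr : IsRotation s) (htr : IsRotation t) (hst : IsRotation (s * t)) :
    ∃ v, s v = v ∧ t v = v := by
  obtain ⟨c, hc⟩ := hst
  rw [Equiv.Perm.mul_apply] at hc
  obtain ⟨m, hm, hmo, hmd⟩ := htr.exists_midpoint hG ht c
  obtain ⟨n, hn, hno, hnd⟩ := hsr.exists_midpoint hG hs (t c)
  rw [hc] at hno hnd
  have : m = n := by
    refine onGeodesic_unique hG hmo (onGeodesic_comm.1 hno) ?_
    have e1 := G.dist_comm (u := c) (v := n)
    have e2 := G.dist_comm (u := t c) (v := n)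
    have e3 := G.dist_comm (u := t c) (v := c)
    unfold OnGeodesic at *
    omega
  exact ⟨m, this ▸ hn, hm⟩

/-- An edge inverted by `g` is the middle edge of the geodesic from `c` to `g c`. -/
theorem exists_middle_edge (hG : G.IsTree) {g : Equiv.Perm V} (hg : IsAut G g) {x y : V}
    (hxy : G.Adj x y) (hx : g x = y) (hy : g y = x) (c : V) :
    ∃ x' y', (x' = x ∧ y' = y ∨ x' = y ∧ y' = x) ∧
      OnGeodesic G c (g c) x' ∧ OnGeodesic G c (g c) y' ∧
      G.dist c (g c) = 2 * G.dist c x' + 1 ∧ G.dist c y' = G.dist c x' + 1 := by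
  have key : ∀ x y : V, G.Adj x y → g x = y → g y = x → G.dist c y = G.dist c x + 1 →
      OnGeodesic G c (g c) x ∧ OnGeodesic G c (g c) y ∧
        G.dist c (g c) = 2 * G.dist c x + 1 := by
    intro x y hxy hx hy h
    have d1 := hg.dist_eq hG c x
    have d2 := hg.dist_eq hG c y
    rw [hx] at d1
    rw [hy] at d2
    have hd := dist_across_edge hG (c := c) (w := g c) hxy h (by omega)
    have e1 := G.dist_comm (u := g c) (v := x)
    have e2 := G.dist_comm (u := g c) (v := y)
    unfold OnGeodesic
    omega
  have hne := hG.dist_ne_of_adj c hxy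
  have hdiff := hxy.diff_dist_adj (u := c)
  rcases (by omega : G.dist c y = G.dist c x + 1 ∨ G.dist c x = G.dist c y + 1) with h | h
  · obtain ⟨h1, h2, h3⟩ := key x y hxy hx hy h
    exact ⟨x, y, Or.inl ⟨rfl, rfl⟩, h1, h2, h3, h⟩
  · obtain ⟨h1, h2, h3⟩ := key y x hxy.symm hy hx h
    exact ⟨y, x, Or.inr ⟨rfl, rfl⟩, h1, h2, h3, h⟩

/-- Two inversions whose product fixes a vertex `c` invert the same edge, the middle edge of the
geodesic from `c` to `t c`. -/
theorem common_inverted (hG : G.IsTree) {s t : Equiv.Perm V} (hs : IsAut G s) (ht : IsAut G t)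
    {x y : V} (hxy : G.Adj x y) (hx : s x = y) (hy : s y = x) (hti : IsInversion G t)
    (hst : IsRotation (s * t)) : t x = y ∧ t y = x := by
  obtain ⟨c, hc⟩ := hst
  rw [Equiv.Perm.mul_apply] at hc
  obtain ⟨u, v, huv, hu, hv⟩ := hti
  obtain ⟨x', y', hor, h1, h2, h3, h4⟩ := exists_middle_edge hG hs hxy hx hy (t c)
  obtain ⟨u', v', hor', k1, k2, k3, k4⟩ := exists_middle_edge hG ht huv hu hv c
  rw [hc] at h1 h2 h3
  have e1 := G.dist_comm (u := c) (v := x')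
  have e2 := G.dist_comm (u := c) (v := y')
  have e3 := G.dist_comm (u := t c) (v := c)
  -- the two geodesics are traversed in opposite directions
  have hxv : x' = v' := onGeodesic_unique hG (onGeodesic_comm.1 h1) k2 (by
    unfold OnGeodesic at *; omega)
  have hyu : y' = u' := onGeodesic_unique hG (onGeodesic_comm.1 h2) k1 (by
    unfold OnGeodesic at *; omega)
  grind

end TreeMetric

/-! ### The generated subgroup -/

/-- If `s` inverts the edge `xy`, and neither `t` nor `s * t` is a translation, then `t` preserves
`{x, y}`. -/
theorem preserves_inverted_edge {G : SimpleGraph V} (hG : G.IsTree) {s t : Equiv.Perm V}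
    (hs : IsAut G s) (ht : IsAut G t) {x y : V} (hxy : G.Adj x y) (hx : s x = y) (hy : s y = x)
    (hnt : ¬ IsTranslation G t) (hnst : ¬ IsTranslation G (s * t)) :
    t x = x ∧ t y = y ∨ t x = y ∧ t y = x := by
  have hst : IsAut G (s * t) := (autGroup G).mul_mem (x := s) (y := t) hs ht
  have hinv : IsAut G s⁻¹ := (autGroup G).inv_mem (x := s) hs
  have hpar := displacement_mul hG s t x
  have hsodd := IsInversion.displacement_odd hG hs ⟨x, y, hxy, hx, hy⟩ (t x)
  have htri : IsRotation t ∨ IsInversion G t := by unfold IsTranslation at hnt; tauto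
  have hstri : IsRotation (s * t) ∨ IsInversion G (s * t) := by
    unfold IsTranslation at hnst; tauto
  have hx' : s⁻¹ y = x := by rw [← hx]; simp
  have hy' : s⁻¹ x = y := by rw [← hy]; simp
  rcases htri with htr | hti
  · have h1 := htr.displacement_even hG ht x
    rcases hstri with hr | hi
    · have := hr.displacement_even hG hst x
      omega
    · -- `s⁻¹` and `s * t` are inversions with product the rotation `t`
      have h := common_inverted hG hinv hst hxy hy' hx' hi (by simpa using htr)
      left
      rw [Equiv.Perm.mul_apply, Equiv.Perm.mul_apply] at h
      exact ⟨s.injective (h.1.trans hx.symm), s.injective (h.2.trans hy.symm)⟩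
  · have h1 := hti.displacement_odd hG ht x
    rcases hstri with hr | hi
    · exact Or.inr (common_inverted hG hs ht hxy hx hy hti hr)
    · have := hi.displacement_odd hG hst x
      omega

/-- An element of the group generated by `T` fixes the common fixed points of some finite
subset of `T`. -/
theorem exists_finset_of_mem_closure {T : Set (Equiv.Perm V)} {π : Equiv.Perm V}
    (hπ : π ∈ Subgroup.closure T) :
    ∃ F : Finset (Equiv.Perm V), (∀ t ∈ F, t ∈ T) ∧ ∀ v, (∀ t ∈ F, t v = v) → π v = v := by
  classical
  induction hπ using Subgroup.closure_induction with
  | mem t ht => exact ⟨{t}, by simpa using ht, by simp⟩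
  | one => exact ⟨∅, by simp, by simp⟩
  | mul a b _ _ iha ihb =>
    obtain ⟨F, hF, hFa⟩ := iha
    obtain ⟨F', hF', hFb⟩ := ihb
    refine ⟨F ∪ F', fun t ht => (Finset.mem_union.1 ht).elim (hF t) (hF' t), fun v hv => ?_⟩
    rw [Equiv.Perm.mul_apply, hFb v fun t ht => hv t (Finset.mem_union_right _ ht),
      hFa v fun t ht => hv t (Finset.mem_union_left _ ht)]
  | inv a _ iha =>
    obtain ⟨F, hF, hFa⟩ := iha
    exact ⟨F, hF, fun v hv => Equiv.Perm.inv_eq_iff_eq.2 (hFa v hv).symm⟩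

/-- if no element of `T ∪ T·T` is a translation, then no element of
the subgroup generated by `T` is a translation. -/
theorem closure_no_translation (G : SimpleGraph V) (hG : G.IsTree)
    (T : Set (Equiv.Perm V)) (hT : T ⊆ (autGroup G : Set (Equiv.Perm V)))
    (hno : ∀ π ∈ T ∪ T * T, ¬ IsTranslation G π) :
    ∀ π ∈ Subgroup.closure T, ¬ IsTranslation G π := by
  intro π hπ
  have haut : ∀ t ∈ T, IsAut G t := fun t ht => hT ht
  by_cases hinv : ∃ s ∈ T, IsInversion G s
  · obtain ⟨s, hs, x, y, hxy, hx, hy⟩ := hinv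
    have hedge : π x = x ∧ π y = y ∨ π x = y ∧ π y = x := by
      induction hπ using Subgroup.closure_induction with
      | mem t ht =>
        exact preserves_inverted_edge hG (haut s hs) (haut t ht) hxy hx hy
          (hno t (Or.inl ht)) (hno _ (Or.inr (Set.mul_mem_mul hs ht)))
      | one => simp
      | mul a b _ _ iha ihb =>
        rw [Equiv.Perm.mul_apply, Equiv.Perm.mul_apply]
        grind
      | inv a _ iha =>
        rw [Equiv.Perm.inv_eq_iff_eq, Equiv.Perm.inv_eq_iff_eq, Equiv.Perm.inv_eq_iff_eq,
          Equiv.Perm.inv_eq_iff_eq]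
        grind
    rintro ⟨hr, hi⟩
    rcases hedge with h | h
    · exact hr ⟨x, h.1⟩
    · exact hi ⟨x, y, hxy, h⟩
  · have hrot : ∀ t ∈ T, IsRotation t := fun t ht => by
      by_contra h
      exact hno t (Or.inl ht) ⟨h, fun hi => hinv ⟨t, ht, hi⟩⟩
    have hpair : ∀ s ∈ T, ∀ t ∈ T, ({v | s v = v} ∩ {v | t v = v} : Set V).Nonempty := by
      intro s hs t ht
      have hst : IsAut G (s * t) := (autGroup G).mul_mem (hT hs) (hT ht)
      refine common_fixed hG (haut s hs) (haut t ht) (hrot s hs) (hrot t ht) ?_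
      by_contra h
      refine hno _ (Or.inr (Set.mul_mem_mul hs ht)) ⟨h, fun hi => ?_⟩
      -- a product of two rotations has even displacements, so it is not an inversion
      obtain ⟨v, -⟩ := hrot s hs
      have h1 := hi.displacement_odd hG hst v
      have h2 := displacement_mul hG s t v
      have h3 := (hrot t ht).displacement_even hG (haut t ht) v
      have h4 := (hrot s hs).displacement_even hG (haut s hs) (t v)
      omega
    obtain ⟨F, hF, hFπ⟩ := exists_finset_of_mem_closure hπ
    have := hG.connected.nonempty
    obtain ⟨v, -, hv⟩ := helly_finset hG (fun t : Equiv.Perm V => {v | t v = v}) F Set.univ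
      Set.univ_nonempty (fun _ _ _ _ _ _ => trivial)
      (fun t ht => (haut t (hF t ht)).geodClosed_fixed hG)
      (fun t ht => (Set.univ_inter _).symm ▸ hrot t (hF t ht))
      (fun s hs t ht => hpair s (hF s hs) t (hF t ht))
    exact fun hπt => hπt.1 ⟨v, hFπ v hv⟩

end BSTrees
end

section
/- Let A be a tree and G ≤ Aut(A). Then every element α of G⁺ satisfies: dist(x, α(x)) is even for every vertex x. Consequently every element of G⁺ is either a rotation or a translation with even translation length; in particular no element of G⁺ swaps the endpoints of an edge. -/
/-!
A tree is bipartite: across an edge, the distance to a fixed vertex changes by exactly one. Two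
consequences carry the argument. Along any walk the parity of the distance to a fixed vertex changes
with the length of the walk, so `dist x y + dist y z` and `dist x z` have the same parity
(`even_dist_add_dist_add_dist`). And the parity of the displacement `dist z (π z)` of an
automorphism `π` does not depend on `z`, since passing from `z` to a neighbour moves both arguments
of `dist` across an edge; in particular an automorphism with a fixed vertex has even displacement
everywhere (`even_dist_of_fixed`).

Hence the generators of `plusGroup G H` move every vertex an even distance, and this property is
preserved by products and inverses. An inversion would move a vertex by distance one, which is odd,
and the minimal displacement of an element of `plusGroup G H` is one of its displacements, hence
even.
-/

open Pointwise

namespace BSTrees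

universe u

variable {V : Type u} {I : Type*}

/-- The parity form of the triangle inequality in a tree. -/
lemma even_dist_add_dist_add_dist {G : SimpleGraph V} (hG : G.IsTree) (u v w : V) :
    Even (G.dist u v + G.dist v w + G.dist u w) := by
  have key : ∀ {a b : V} (p : G.Walk a b), Even (G.dist u a + p.length + G.dist u b) := by
    intro a b p
    induction p with
    | nil => simp
    | cons h p ih =>
      have h1 := hG.dist_eq_dist_add_one_of_adj u h
      rw [SimpleGraph.Walk.length_cons]
      grind
  obtain ⟨p, hp⟩ := (hG.connected v w).exists_walk_length_eq_dist
  rw [← hp]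
  exact key p

/-- The parity of the displacement of a tree automorphism is the same at all vertices, so it is even
as soon as some vertex is fixed. -/
lemma even_dist_of_fixed {G : SimpleGraph V} (hG : G.IsTree) {π : Equiv.Perm V}
    (hπ : IsAut G π) {x : V} (hx : π x = x) (z : V) : Even (G.dist z (π z)) := by
  have key : ∀ {a b : V} (_ : G.Walk a b), Even (G.dist a (π a)) → Even (G.dist b (π b)) := by
    intro a b p
    induction p with
    | nil => exact id
    | @cons a c b h p ih =>
      intro ha
      apply ih
      -- Compare both displacements with `dist a (π c)`.
      have h1 := hG.dist_eq_dist_add_one_of_adj a ((hπ a c).2 h)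
      have h2 := hG.dist_eq_dist_add_one_of_adj (π c) h
      rw [G.dist_comm (u := π c) (v := a), G.dist_comm (u := π c) (v := c)] at h2
      grind
  obtain ⟨p⟩ := hG.connected x z
  exact key p (by simp [hx])

lemma even_dist_of_mem_plusGroup {G : SimpleGraph V} (hG : G.IsTree)
    {H : Subgroup (Equiv.Perm V)} (hH : H ≤ autGroup G) {α : Equiv.Perm V}
    (hα : α ∈ plusGroup G H) : ∀ x, Even (G.dist x (α x)) := by
  unfold plusGroup at hα
  induction hα using Subgroup.closure_induction with
  | mem π hπ =>
    obtain ⟨hπH, x, _, _, hx, _⟩ := hπ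
    exact even_dist_of_fixed hG (hH hπH) hx
  | one => simp
  | mul a b _ _ iha ihb =>
    intro x
    have h1 := ihb x
    have h2 := iha (b x)
    have h3 := even_dist_add_dist_add_dist hG x (b x) (a (b x))
    rw [Equiv.Perm.mul_apply]
    grind
  | inv a _ iha =>
    intro x
    simpa [G.dist_comm] using iha (a⁻¹ x)

/-- every element of `G⁺` moves every vertex an even distance;
consequently it is a rotation or a translation of even translation length, and
in particular no element of `G⁺` swaps the endpoints of an edge. -/
theorem plusGroup_even_displacement (G : SimpleGraph V) (hG : G.IsTree)
    (H : Subgroup (Equiv.Perm V)) (hH : H ≤ autGroup G) :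
    ∀ α ∈ plusGroup G H,
      (∀ x, Even (G.dist x (α x))) ∧
      (IsRotation α ∨ (IsTranslation G α ∧
        ∃ ℓ, TranslationLengthIs G α ℓ ∧ Even ℓ)) ∧
      ¬ IsInversion G α := by
  intro α hα
  have heven := even_dist_of_mem_plusGroup hG hH hα
  have hinv : ¬ IsInversion G α := by
    rintro ⟨x, y, hxy, rfl, -⟩
    have h := heven x
    rw [SimpleGraph.dist_eq_one_iff_adj.2 hxy] at h
    exact absurd h (by decide)
  refine ⟨heven, ?_, hinv⟩
  by_cases hrot : IsRotation α
  · exact Or.inl hrot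
  · obtain ⟨v⟩ := hG.connected.nonempty
    have hmem : sInf {d | ∃ s, G.dist s (α s) = d} ∈ {d | ∃ s, G.dist s (α s) = d} :=
      Nat.sInf_mem ⟨_, v, rfl⟩
    refine Or.inr ⟨⟨hrot, hinv⟩, _, ⟨hmem, fun d hd => Nat.sInf_le hd⟩, ?_⟩
    obtain ⟨s, hs⟩ := hmem
    rw [← hs]
    exact heven s

end BSTrees
end

section
/- Let (A, f) be a colored tree and let H = Aut_f⁺(A). Then an automorphism α ∈ Aut(A) belongs to H if and only if, for every vertex v, α(v) lies in the H-orbit of v. Equivalently, Aut_f⁺(A) = Aut_{f⁺}(A), where f⁺ is the coloring assigning to each vertex its Aut_f⁺(A)-orbit. -/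
/-!
Write `H = Aut_f⁺(A)`. The point is that the quotient of the tree by `H` has no multiple edges,
because `H` is generated by elements with fixed vertices (`exists_fixing`). If `w` and `u = h w` are
neighbours of `v` but no element of `H` fixes `v` and maps `w` to `u`, then `{v, u}` is not in the
`H`-orbit `S` of the edge `{v, w}`. Let `p x ∈ ℤ/2` be the number of edges of `S` on the path from a
root to `x` (`exists_potential`). Since `S` is `H`-invariant and the generators of `H` have fixed
vertices, `p` is `H`-invariant (`potential_invariant`); but `p w = p v + 1` and `p u = p v`, a
contradiction.

Now let `α` preserve all `H`-orbits. Then `α` preserves `f`. Multiplying by an element of `H`,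
one may assume that `α` fixes a vertex `v`. If `w` is a neighbour of `v`, there is `k ∈ H` fixing `v`
with `k w = α w`, so `k⁻¹ α` fixes the edge `{v, w}` pointwise and lies in `H`. If `v` has no
neighbours, the tree is a single vertex and `α = 1`.
-/

open Pointwise

namespace BSTrees

universe u

variable {V : Type u} {I : Type*}

/-! ### Potentials on a tree -/

/-- On a tree every symmetric relation `S` on edges is the coboundary of a potential mod 2:
`p x` counts the `S`-edges on the path from a fixed root to `x`. -/
lemma exists_potential {G : SimpleGraph V} (hG : G.IsTree) (S : V → V → Prop)
    (hS : ∀ x y, S x y → S y x) :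
    ∃ p : V → ZMod 2, ∀ x y, G.Adj x y → (S x y → p y = p x + 1) ∧ (¬ S x y → p y = p x) := by
  classical
  obtain ⟨r⟩ := hG.connected.nonempty
  choose P hP _ using hG.existsUnique_path r
  let c : V → V → ZMod 2 := fun x y => if S x y then 1 else 0
  let p : V → ZMod 2 := fun x => ((P x).darts.map fun d => c d.fst d.snd).sum
  -- If `x` lies on the path to `y`, that path is the path to `x` followed by the edge `x y`.
  have key : ∀ x y, G.Adj x y → x ∈ (P y).support → p y = p x + c x y := by
    intro x y hxy hx
    have h := hG.isAcyclic.path_concat (hP x) (hP y) hxy hx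
    simp only [p, h, SimpleGraph.Walk.darts_concat]
    simp
  have hc : ∀ x y, c x y = c y x := fun x y => by
    simp only [c, show S x y ↔ S y x from ⟨hS x y, hS y x⟩]
  have key2 : ∀ x y, G.Adj x y → p y = p x + c x y := by
    intro x y hxy
    by_cases hx : x ∈ (P y).support
    · exact key x y hxy hx
    · have hy := hG.isAcyclic.mem_support_of_ne_mem_support_of_adj_of_isPath
        (hP x) (hP y) hxy hx
      rw [key y x hxy.symm hy, hc x y, add_assoc, CharTwo.add_self_eq_zero, add_zero]
  refine ⟨p, fun x y hxy => ⟨fun h => ?_, fun h => ?_⟩⟩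
  · simpa [c, h] using key2 x y hxy
  · simpa [c, h] using key2 x y hxy

lemma autfPlus_le_autf (G : SimpleGraph V) (f : V → I) : autfPlus G f ≤ autf G f :=
  (Subgroup.closure_le _).2 fun _ h => h.1

/-- A potential of an `Aut_f⁺`-invariant set of edges is itself `Aut_f⁺`-invariant: for a
generator `g`, the difference `p (g x) - p x` is constant along edges, and it vanishes at a
fixed vertex of `g`. -/
lemma potential_invariant {G : SimpleGraph V} (hG : G.IsTree) (f : V → I) (S : V → V → Prop)
    (hinv : ∀ g ∈ autfPlus G f, ∀ x y, S (g x) (g y) ↔ S x y) (p : V → ZMod 2)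
    (hp : ∀ x y, G.Adj x y → (S x y → p y = p x + 1) ∧ (¬ S x y → p y = p x))
    (h : Equiv.Perm V) (hh : h ∈ autfPlus G f) : ∀ x, p (h x) = p x := by
  have gen : ∀ g ∈ edgeStabilizers G (autf G f), ∀ x, p (g x) = p x := by
    rintro g hg x
    have hgH : g ∈ autfPlus G f := Subgroup.subset_closure hg
    obtain ⟨⟨haut, -⟩, a, -, -, ha, -⟩ := hg
    obtain ⟨w⟩ := hG.connected x a
    induction w with
    | nil => rw [ha]
    | @cons u v _ hadj _ ih =>
      have ih := ih ha
      have h1 := hp _ _ hadj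
      have h2 := hp _ _ ((haut _ _).2 hadj)
      rw [hinv g hgH] at h2
      by_cases hs : S u v
      · have e1 := h1.1 hs
        have e2 := h2.1 hs
        rw [e1, e2] at ih
        exact add_right_cancel ih
      · rw [← h1.2 hs, ← h2.2 hs, ih]
  refine Subgroup.closure_induction (p := fun h _ => ∀ x, p (h x) = p x) gen (fun _ => rfl)
    (fun a b _ _ ha hb x => (ha (b x)).trans (hb x)) (fun a _ ha x => ?_) hh
  simpa using (ha (a⁻¹ x)).symm

/-! ### The local action of `Aut_f⁺` -/

/-- `Aut_f⁺` preserves the bipartition of the tree, so it moves no vertex to a neighbour. -/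
lemma not_adj_apply {G : SimpleGraph V} (hG : G.IsTree) (f : V → I) (h : Equiv.Perm V)
    (hh : h ∈ autfPlus G f) (v : V) : ¬ G.Adj v (h v) := by
  intro hadj
  obtain ⟨p, hp⟩ := exists_potential hG (fun _ _ => True) (fun _ _ h => h)
  have h1 := potential_invariant hG f _ (fun _ _ _ _ => Iff.rfl) p hp h hh v
  rw [(hp _ _ hadj).1 trivial] at h1
  simp at h1

/-- Neighbours of `v` in the same `Aut_f⁺`-orbit are in the same orbit of the stabilizer of `v`;
that is, the quotient of the tree by `Aut_f⁺` has no multiple edges. -/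
lemma exists_fixing {G : SimpleGraph V} (hG : G.IsTree) (f : V → I) {v w u : V}
    (hvw : G.Adj v w) (hvu : G.Adj v u) (h : Equiv.Perm V) (hh : h ∈ autfPlus G f)
    (hwu : h w = u) : ∃ k ∈ autfPlus G f, k v = v ∧ k w = u := by
  by_contra hcon
  -- `S` is the orbit of the edge `{v, w}`.
  let S : V → V → Prop := fun x y =>
    ∃ g ∈ autfPlus G f, (g v = x ∧ g w = y) ∨ (g v = y ∧ g w = x)
  have hS : ∀ x y, S x y → S y x := fun x y ⟨g, hg, h⟩ => ⟨g, hg, h.symm⟩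
  have hmap : ∀ g ∈ autfPlus G f, ∀ x y, S x y → S (g x) (g y) := by
    rintro g hg x y ⟨k, hk, hkxy⟩
    refine ⟨g * k, mul_mem hg hk, ?_⟩
    rcases hkxy with ⟨rfl, rfl⟩ | ⟨rfl, rfl⟩
    · exact Or.inl ⟨rfl, rfl⟩
    · exact Or.inr ⟨rfl, rfl⟩
  have hinv : ∀ g ∈ autfPlus G f, ∀ x y, S (g x) (g y) ↔ S x y := by
    refine fun g hg x y => ⟨fun h => ?_, hmap g hg x y⟩
    simpa using hmap g⁻¹ (inv_mem hg) _ _ h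
  obtain ⟨p, hp⟩ := exists_potential hG S hS
  have hpw : p w = p v + 1 := (hp v w hvw).1 ⟨1, one_mem _, Or.inl ⟨rfl, rfl⟩⟩
  have hpu : p u = p v := by
    refine (hp v u hvu).2 ?_
    rintro ⟨g, hg, ⟨h1, h2⟩ | ⟨h1, -⟩⟩
    · exact hcon ⟨g, hg, h1, h2⟩
    · exact not_adj_apply hG f g hg v (h1 ▸ hvu)
  have := potential_invariant hG f S hinv p hp h hh w
  rw [hwu, hpu, hpw] at this
  simp at this

/-! ### The characterization of `Aut_f⁺` -/

/-- an automorphism `α` belongs to `H = Aut_f⁺(A)` iff `α(v)` lies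
in the `H`-orbit of `v` for every vertex `v`; i.e. `Aut_f⁺(A) = Aut_{f⁺}(A)`. -/
theorem mem_autfPlus_iff_orbit (G : SimpleGraph V) (hG : G.IsTree) (f : V → I)
    (α : Equiv.Perm V) (hα : α ∈ autGroup G) :
    α ∈ autfPlus G f ↔ ∀ v : V, ∃ h ∈ autfPlus G f, h v = α v := by
  refine ⟨fun h v => ⟨α, h, rfl⟩, fun horb => ?_⟩
  have hle := autfPlus_le_autf G f
  have hαf : α ∈ autf G f := by
    refine ⟨hα, fun v => ?_⟩
    obtain ⟨h, hh, e⟩ := horb v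
    rw [← e]
    exact (hle hh).2 v
  obtain ⟨v⟩ := hG.connected.nonempty
  by_cases hv : ∃ w, G.Adj v w
  · obtain ⟨w, hvw⟩ := hv
    obtain ⟨h, hh, e⟩ := horb v
    obtain ⟨h', hh', e'⟩ := horb w
    have hinv : h⁻¹ (α v) = v := Equiv.Perm.inv_eq_iff_eq.2 e.symm
    have hadj : G.Adj v (h⁻¹ (α w)) := by
      have := ((hle (inv_mem hh)).1 (α v) (α w)).2 ((hα v w).2 hvw)
      rwa [hinv] at this
    obtain ⟨k, hk, hkv, hkw⟩ := exists_fixing hG f hvw hadj (h⁻¹ * h')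
      (mul_mem (inv_mem hh) hh') (by rw [Equiv.Perm.mul_apply, e'])
    have hfix : k⁻¹ * h⁻¹ * α ∈ autfPlus G f := by
      refine Subgroup.subset_closure
        ⟨mul_mem (mul_mem (inv_mem (hle hk)) (inv_mem (hle hh))) hαf, v, w, hvw, ?_, ?_⟩
      · simp only [Equiv.Perm.mul_apply]
        rw [hinv, Equiv.Perm.inv_eq_iff_eq, hkv]
      · simp only [Equiv.Perm.mul_apply]
        rw [Equiv.Perm.inv_eq_iff_eq, hkw]
    have := mul_mem (mul_mem hh hk) hfix
    simpa [mul_assoc] using this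
  · have hall : ∀ x, v = x := fun x => by
      obtain ⟨q⟩ := hG.connected v x
      cases q with
      | nil => rfl
      | cons hadj _ => exact absurd ⟨_, hadj⟩ hv
    have : α = 1 := Equiv.ext fun x => (hall _).symm.trans (hall _)
    rw [this]
    exact one_mem _

end BSTrees
end
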